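/- Let $\xi_1,\dots,\xi_{n+1}\in\mathbb{Z}^2\setminus\{0\}$ with $\xi_1+\cdots+\xi_{n+1}=0$ and $|\xi_1|+\cdots+|\xi_{n+1}|\le T$ for some $T\ge 2$. Then there is a constant $C$ (independent of $n$ and $T$) such that $\sum \frac{1}{|\xi_1|\,|\xi_2|\cdots|\xi_{n+1}|} \le C\,(2\pi)^n\,(\log T)\,\frac{T^{n-1}}{(n-1)!}$, where the sum ranges over all such tuples $(\xi_1,\dots,\xi_{n+1})$. -/

import Mathlib

/-!
By the closing condition one of the vectors is determined by the others. Applying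
`x y ≤ (x² + y²) / 2` to its weight and to that of a second vector, and exchanging the two, reduces
the sum to `∑_z |z|⁻² · G_{n-1}(T - |z|)`, where `G_k(T)` is the sum of `∏ |ξ_i|⁻¹` over `k`-tuples
with `∑ |ξ_i| ≤ T` (`loop_sum_bound`). As `∑_{|z| ≤ T} |z|⁻² = O(log T)` (`sum_inv_sq`), it
suffices that `G_k(T) ≤ 2 (2πT)^k / k!` (`simplexSum_bound`).

The constant `2π` per variable must be exact, so the comparison of lattice sums with integrals may
not lose a factor in each variable. Since
`G_{k+1}(T) = ∑_z |z|⁻¹ G_k(T - |z|)`, what is needed for `k ≥ 1` is the sharp inequality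
`∑_z |z|⁻¹ (T - |z|)₊^k ≤ 2π T^(k+1) / (k+1)`. By integration in `T` (`higher_moment`) it follows
from the case `k = 1`, that is `∑_z (T / |z| - 1)₊ ≤ ∫ (T / |x| - 1)₊ dx = πT²` (`first_moment`).

The last inequality comes from the subharmonicity of `1 / |x|` away from the origin in the plane.
For `|z|² ≥ 2` the mean of `1 / |x|` over the unit square centred at `z` is at least `1 / |z|`:
already the mean over the four rotations of a displacement is (`rot_avg`, `factor_one`), and taking
positive parts after subtracting `1` only increases the mean. At the four unit vectors the same
argument loses at most a tenth (`factor_ninety`), and the square centred at the origin, which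
carries no term of the sum, more than compensates for it (`cell_zero_lower`).
-/

open Real Finset

/-- Euclidean norm of an integer lattice vector. -/
noncomputable def latNorm (z : ℤ × ℤ) : ℝ := Real.sqrt ((z.1 : ℝ) ^ 2 + (z.2 : ℝ) ^ 2)

open MeasureTheory

/-! ### The mean of the inverse distance over rotations -/

/-- The cubic Taylor polynomial of `u ↦ (1 + u)^(-1/2)` at `0` lies below the function, written in
terms of `w = √(1 + u)`. -/
lemma inv_taylor {w : ℝ} (hw : 0 < w) :
    1 - (w^2-1)/2 + 3/8*(w^2-1)^2 - 5/16*(w^2-1)^3 ≤ 1 / w := by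
  rw [le_div_iff₀ hw]
  -- `1 - w P(w² - 1)` has a fourth-order zero at `w = 1`, and the cofactor has positive coefficients
  have : 0 ≤ (w-1)^4 * (5*w^3+20*w^2+29*w+16) := by positivity
  nlinarith [this]

/-- The sum of `1 / |ξ + y|` over the four rotations of `y = (c, d)` by multiples of a right angle,
where `ξ = (a, b)`. In `inv_taylor` the odd powers cancel between `y` and `-y`, and the quadratic
ones add up to a multiple of `|ξ|² |y|²`, whatever the direction of `y`. -/
lemma rot_avg (a b c d : ℝ) (N r A : ℝ) (hN : N = a^2+b^2) (hr : r = c^2+d^2)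
   (hN0 : 0 < N)
   (hA : A = N + r)
   (h1 : 0 < (a+c)^2+(b+d)^2) (h2 : 0 < (a-c)^2+(b-d)^2)
   (h3 : 0 < (a-d)^2+(b+c)^2) (h4 : 0 < (a+d)^2+(b-c)^2) :
   (4 + 3 * N * r / A^2) / √A ≤ 1/√((a+c)^2+(b+d)^2) + 1/√((a-c)^2+(b-d)^2)
     + 1/√((a-d)^2+(b+c)^2) + 1/√((a+d)^2+(b-c)^2) := by
  have hr0 : 0 ≤ r := by rw [hr]; positivity
  have hA0 : 0 < A := by linarith
  have key : ∀ D : ℝ, 0 < D → (1 - (D/A-1)/2 + 3/8*(D/A-1)^2 - 5/16*(D/A-1)^3) / √A ≤ 1/√D := by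
    intro D hD
    have := inv_taylor (w := √(D/A)) (by positivity)
    rw [Real.sq_sqrt (by positivity)] at this
    rw [div_le_iff₀ (by positivity)]
    refine this.trans (le_of_eq ?_)
    rw [Real.sqrt_div hD.le]
    field_simp
  refine le_trans (le_of_eq ?_) (add_le_add (add_le_add (add_le_add (key _ h1) (key _ h2)) (key _ h3)) (key _ h4))
  rw [← add_div, ← add_div, ← add_div]
  congr 1
  have e1 : ((a+c)^2+(b+d)^2)/A - 1 = 2*(a*c+b*d)/A := by field_simp; rw [hA, hN, hr]; ring
  have e2 : ((a-c)^2+(b-d)^2)/A - 1 = -(2*(a*c+b*d)/A) := by field_simp; rw [hA, hN, hr]; ring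
  have e3 : ((a-d)^2+(b+c)^2)/A - 1 = 2*(b*c-a*d)/A := by field_simp; rw [hA, hN, hr]; ring
  have e4 : ((a+d)^2+(b-c)^2)/A - 1 = -(2*(b*c-a*d)/A) := by field_simp; rw [hA, hN, hr]; ring
  rw [e1, e2, e3, e4, hN, hr]
  field_simp
  ring

/-- For `|y| ≤ |ξ| / 2` the bound of `rot_avg` is at least `4 / |ξ|`. -/
lemma factor_one {N r A : ℝ} (hN : 0 < N) (hr : 0 ≤ r) (hA : A = N + r) (h : 4 * r ≤ N) :
    4 / √N ≤ (4 + 3 * N * r / A^2) / √A := by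
  have hA0 : 0 < A := by linarith
  obtain ⟨y, hy⟩ : ∃ y, y = A / N := ⟨_, rfl⟩
  have hAy : A = y * N := by rw [hy]; field_simp
  have hy1 : 1 ≤ y := by rw [hy, le_div_iff₀ hN]; linarith
  have hy2 : y ≤ 5/4 := by rw [hy, div_le_iff₀ hN]; linarith
  have hry : r = (y-1)*N := by linarith
  have e : 4 + 3 * N * r / A^2 = 4 * ((y^2 + 3/4*(y-1))/y^2) := by
    rw [hry, hAy]; field_simp
  rw [e, hAy, Real.sqrt_mul (by linarith)]
  have h1 : √y ≤ (y^2 + 3/4*(y-1))/y^2 := by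
    rw [Real.sqrt_le_left (by apply div_nonneg <;> nlinarith), div_pow, le_div_iff₀ (by positivity)]
    -- the product equals `(y² + 3(y-1)/4)² - y⁵`
    have : 0 ≤ (y-1) * (-y^4+1.5*y^2+0.5625*y-0.5625) := by
      apply mul_nonneg (by linarith)
      nlinarith [mul_nonneg (sub_nonneg.2 hy1) (sub_nonneg.2 hy2), mul_nonneg (mul_nonneg (sub_nonneg.2 hy1) (sub_nonneg.2 hy2)) (sq_nonneg y)]
    nlinarith
  have hs : 0 < √y := by positivity
  rw [div_le_div_iff₀ (by positivity) (by positivity)]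
  nlinarith [mul_le_mul_of_nonneg_right h1 (Real.sqrt_nonneg N)]

/-- For `|y|² ≤ |ξ|² / 2` the bound of `rot_avg` still retains nine tenths of `4 / |ξ|`; this
serves the four vectors with `|ξ| = 1`, for which `factor_one` is not available on the whole cell. -/
lemma factor_ninety {N r A : ℝ} (hN : 0 < N) (hr : 0 ≤ r) (hA : A = N + r) (h : 2 * r ≤ N) :
    4 * 0.9 / √N ≤ (4 + 3 * N * r / A^2) / √A := by
  have hA0 : 0 < A := by linarith
  obtain ⟨y, hy⟩ : ∃ y, y = A / N := ⟨_, rfl⟩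
  have hAy : A = y * N := by rw [hy]; field_simp
  have hy1 : 1 ≤ y := by rw [hy, le_div_iff₀ hN]; linarith
  have hy2 : y ≤ 3/2 := by rw [hy, div_le_iff₀ hN]; linarith
  have hry : r = (y-1)*N := by linarith
  have e : 4 + 3 * N * r / A^2 = 4 * ((y^2 + 3/4*(y-1))/y^2) := by
    rw [hry, hAy]; field_simp
  rw [e, hAy, Real.sqrt_mul (by linarith)]
  have h1 : √y ≤ (y^2 + 3/4*(y-1))/y^2/0.9 := by
    rw [Real.sqrt_le_left (by apply div_nonneg; apply div_nonneg <;> nlinarith; norm_num), div_pow, div_pow,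
      le_div_iff₀ (by positivity), le_div_iff₀ (by positivity)]
    -- the product equals `(y² + 3(y-1)/4)² - 0.81 y⁵ - 0.19 + 0.36 (y-1)`, and `0.36 (y-1) ≤ 0.19`
    have : 0 ≤ (y-1) * (-y^4+1.5*y^2+0.5625*y-0.5625 + 0.19*(y^4+y^3+y^2+y+1) + 0.36) := by
      apply mul_nonneg (by linarith)
      nlinarith [mul_nonneg (sub_nonneg.2 hy1) (sub_nonneg.2 hy2), mul_nonneg (mul_nonneg (sub_nonneg.2 hy1) (sub_nonneg.2 hy2)) (sq_nonneg y)]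
    nlinarith
  have hs : 0 < √y := by positivity
  rw [div_le_div_iff₀ (by positivity) (by positivity)]
  rw [le_div_iff₀ (by norm_num)] at h1
  nlinarith [mul_le_mul_of_nonneg_right h1 (Real.sqrt_nonneg N)]

/-! ### Comparison of the lattice sum with the integral -/

/-- The function `(T / |p| - 1)₊` on the plane. At `p = 0` the convention `T / 0 = 0` gives the
value `0`, on a null set. -/
noncomputable def cutKernel (T : ℝ) (p : ℝ × ℝ) : ℝ := max (T / √(p.1 ^ 2 + p.2 ^ 2) - 1) 0

lemma measurable_cutKernel (T : ℝ) : Measurable (fun p => ENNReal.ofReal (cutKernel T p)) := by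
  unfold cutKernel
  fun_prop

lemma lintegral_cutKernel {T : ℝ} (hT : 0 ≤ T) :
    ∫⁻ p, ENNReal.ofReal (cutKernel T p) = ENNReal.ofReal (π * T ^ 2) := by
  rw [← lintegral_comp_polarCoord_symm]
  have h1 : ∫⁻ p in polarCoord.target,
        ENNReal.ofReal p.1 • ENNReal.ofReal (cutKernel T (polarCoord.symm p))
      = ∫⁻ p in (Set.Ioi (0:ℝ)) ×ˢ (Set.Ioo (-π) π), ENNReal.ofReal (max (T - p.1) 0) := by
    rw [polarCoord_target]
    refine setLIntegral_congr_fun (measurableSet_Ioi.prod measurableSet_Ioo) ?_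
    rintro ⟨r, θ⟩ ⟨hr, -⟩
    have hr' : 0 < r := hr
    have hn : (r * cos θ) ^ 2 + (r * sin θ) ^ 2 = r ^ 2 := by
      have := Real.sin_sq_add_cos_sq θ
      linear_combination r ^ 2 * this
    simp only [cutKernel, polarCoord_symm_apply, hn, Real.sqrt_sq hr'.le, smul_eq_mul]
    rw [← ENNReal.ofReal_mul hr'.le, mul_max_of_nonneg _ _ hr'.le]
    congr 2
    · field_simp
    · simp
  rw [h1, Measure.volume_eq_prod, setLIntegral_prod _ (by fun_prop)]
  simp only [lintegral_const, Measure.restrict_apply_univ, Real.volume_Ioo]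
  rw [lintegral_mul_const _ (by fun_prop)]
  have h2 : ∫⁻ r in Set.Ioi (0:ℝ), ENNReal.ofReal (max (T - r) 0) = ENNReal.ofReal (T ^ 2 / 2) := by
    have h3 : ∫ r in (0:ℝ)..T, (T - r) = T ^ 2 / 2 := by
      rw [intervalIntegral.integral_sub (by simp) (by simp)]
      simp; ring
    rw [← h3, intervalIntegral.integral_of_le hT, ofReal_integral_eq_lintegral_ofReal]
    · rw [← Set.Ioc_union_Ioi_eq_Ioi hT, lintegral_union measurableSet_Ioi
        (Set.disjoint_left.2 fun x hx hx' => not_lt.2 hx.2 hx')]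
      rw [setLIntegral_congr_fun (g := fun _ => 0) (measurableSet_Ioi (a := T))]
      · simp
      · intro x hx
        have : T - x ≤ 0 := by have : T < x := hx; linarith
        simp [this]
    · exact (Continuous.integrableOn_Ioc (by fun_prop))
    · filter_upwards [ae_restrict_mem measurableSet_Ioc] with x hx
      simpa using hx.2
  rw [h2, ← ENNReal.ofReal_mul (by positivity)]
  congr 1; ring

/-- The open unit square centred at the origin. Being open, it is invariant under rotation by a
right angle. -/
def unitSq : Set (ℝ × ℝ) := Set.Ioo (-(1/2)) (1/2) ×ˢ Set.Ioo (-(1/2)) (1/2)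

/-- The open unit square centred at the lattice point `z`. -/
def cell (z : ℤ × ℤ) : Set (ℝ × ℝ) := (fun x => (-(z.1 : ℝ), -(z.2 : ℝ)) + x) ⁻¹' unitSq

lemma measurableSet_unitSq : MeasurableSet unitSq :=
  measurableSet_Ioo.prod measurableSet_Ioo

lemma volume_unitSq : volume unitSq = 1 := by
  rw [unitSq, Measure.volume_eq_prod, Measure.prod_prod, Real.volume_Ioo]
  norm_num

lemma measurableSet_cell (z : ℤ × ℤ) : MeasurableSet (cell z) :=
  measurableSet_unitSq.preimage (by fun_prop)

lemma cell_disjoint : Pairwise (fun z w => Disjoint (cell z) (cell w)) := by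
  intro z w hzw
  rw [Set.disjoint_left]
  rintro ⟨x, y⟩ ⟨⟨h1, h2⟩, h3, h4⟩ ⟨⟨h5, h6⟩, h7, h8⟩
  simp only [Prod.mk_add_mk] at *
  apply hzw
  have e : ∀ a b : ℤ, ((a:ℝ) - b < 1) → a ≤ b := by
    intro a b h
    have : a - b < 1 := by exact_mod_cast h
    omega
  ext
  · exact le_antisymm (e _ _ (by linarith)) (e _ _ (by linarith))
  · exact le_antisymm (e _ _ (by linarith)) (e _ _ (by linarith))

lemma lintegral_cell (z : ℤ × ℤ) (f : ℝ × ℝ → ENNReal) :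
    ∫⁻ x in cell z, f x = ∫⁻ y in unitSq, f ((z.1 : ℝ) + y.1, (z.2 : ℝ) + y.2) := by
  have := (measurePreserving_add_left (volume : Measure (ℝ × ℝ))
    (-(z.1 : ℝ), -(z.2 : ℝ))).setLIntegral_comp_preimage_emb (measurableEmbedding_addLeft _)
    (fun y => f ((z.1 : ℝ) + y.1, (z.2 : ℝ) + y.2)) unitSq
  rw [← this, cell]
  congr 1
  ext x
  simp

lemma lintegral_rot (f : ℝ × ℝ → ENNReal) (hf : Measurable f) :
    ∫⁻ y in unitSq, f (-y.2, y.1) = ∫⁻ y in unitSq, f y := by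
  have hmp : MeasurePreserving (fun y : ℝ × ℝ => (-y.2, y.1)) volume volume :=
    (((Measure.measurePreserving_neg (volume : Measure ℝ)).prod
      (MeasurePreserving.id (volume : Measure ℝ))).comp Measure.measurePreserving_swap)
  rw [← hmp.setLIntegral_comp_preimage measurableSet_unitSq hf]
  congr 2
  ext ⟨a, b⟩
  simp only [unitSq, Set.mem_prod, Set.mem_Ioo, Set.mem_preimage]
  constructor
  · rintro ⟨⟨_, _⟩, _, _⟩; refine ⟨⟨?_, ?_⟩, ?_, ?_⟩ <;> linarith
  · rintro ⟨⟨_, _⟩, _, _⟩; refine ⟨⟨?_, ?_⟩, ?_, ?_⟩ <;> linarith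

/-- The cell of a nonzero lattice point does not contain the origin. -/
lemma sq_pos_of_cell {z : ℤ × ℤ} (hz : z ≠ 0) {c d : ℝ} (hc : |c| < 1/2) (hd : |d| < 1/2) :
    0 < ((z.1 : ℝ) + c) ^ 2 + ((z.2 : ℝ) + d) ^ 2 := by
  have key : ∀ (m : ℤ) (c : ℝ), m ≠ 0 → |c| < 1/2 → 0 < ((m : ℝ) + c) ^ 2 := by
    intro m c hm hc
    have h1 : (1:ℝ) ≤ |(m:ℝ)| := by exact_mod_cast Int.one_le_abs hm
    have : (m:ℝ) + c ≠ 0 := by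
      intro h
      have : (m:ℝ) = -c := by linarith
      rw [this, abs_neg] at h1
      linarith
    positivity
  by_cases h : z.1 = 0
  · have : z.2 ≠ 0 := fun h' => hz (Prod.ext h h')
    have := key _ _ this hd
    positivity
  · have := key _ _ h hc
    positivity

/-- If the bound of `rot_avg` is at least `4κ / |z|` throughout the cell of `z`, then the integral
of `cutKernel T` over this cell is at least `κ T / |z| - 1`: average the integrand over the four
rotations of the cell about its centre. -/
lemma cell_lower {z : ℤ × ℤ} (hz : z ≠ 0) {T κ : ℝ} (hT : 0 ≤ T)
    (hκ : ∀ r A : ℝ, 0 ≤ r → 2 * r ≤ 1 → A = latNorm z ^ 2 + r →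
      4 * κ / latNorm z ≤ (4 + 3 * latNorm z ^ 2 * r / A ^ 2) / √A) :
    ENNReal.ofReal (κ * T / latNorm z - 1) ≤ ∫⁻ x in cell z, ENNReal.ofReal (cutKernel T x) := by
  rw [lintegral_cell]
  set F : ℝ × ℝ → ENNReal := fun y => ENNReal.ofReal (cutKernel T ((z.1 : ℝ) + y.1, (z.2 : ℝ) + y.2))
    with hF
  have hFm : Measurable F := (measurable_cutKernel T).comp (by fun_prop)
  have r1 := lintegral_rot F hFm
  have r2 := lintegral_rot (fun y => F (-y.2, y.1)) (hFm.comp (by fun_prop))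
  have r3 := lintegral_rot (fun y => F (-y.1, -y.2)) (hFm.comp (by fun_prop))
  simp only at r2 r3
  have hsum : ∫⁻ y in unitSq, (F y + F (-y.1, -y.2) + F (-y.2, y.1) + F (- -y.2, -y.1))
      = 4 * ∫⁻ y in unitSq, F y := by
    rw [lintegral_add_left, lintegral_add_left, lintegral_add_left, r3, r2, r1]
    · ring
    all_goals fun_prop
  have hlow : 4 * ENNReal.ofReal (κ * T / latNorm z - 1)
      ≤ ∫⁻ y in unitSq, (F y + F (-y.1, -y.2) + F (-y.2, y.1) + F (- -y.2, -y.1)) := by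
    calc 4 * ENNReal.ofReal (κ * T / latNorm z - 1)
        = ∫⁻ y in unitSq, 4 * ENNReal.ofReal (κ * T / latNorm z - 1) := by
          rw [setLIntegral_const, volume_unitSq, mul_one]
      _ ≤ _ := by
          refine setLIntegral_mono' measurableSet_unitSq ?_
          rintro ⟨c, d⟩ ⟨⟨hc1, hc2⟩, hd1, hd2⟩
          simp only at hc1 hc2 hd1 hd2
          have hc : |c| < 1/2 := abs_lt.2 ⟨hc1, hc2⟩
          have hd : |d| < 1/2 := abs_lt.2 ⟨hd1, hd2⟩
          have hN : latNorm z ^ 2 = (z.1:ℝ)^2 + (z.2:ℝ)^2 := Real.sq_sqrt (by positivity)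
          have hN0 : 0 < latNorm z ^ 2 := by
            rw [hN]; simpa using sq_pos_of_cell hz (c := 0) (d := 0) (by norm_num) (by norm_num)
          have hr : 2 * (c^2+d^2) ≤ 1 := by nlinarith
          have p1 := sq_pos_of_cell hz hc hd
          have p2 := sq_pos_of_cell hz (c := -c) (d := -d) (by simpa using hc) (by simpa using hd)
          have p3 := sq_pos_of_cell hz (c := -d) (d := c) (by simpa using hd) hc
          have p4 := sq_pos_of_cell hz (c := d) (d := -c) hd (by simpa using hc)
          have main := (hκ (c^2+d^2) _ (by positivity) hr rfl).trans
            (rot_avg (z.1:ℝ) z.2 c d _ _ _ hN rfl hN0 rfl p1 (by simpa [sub_eq_add_neg] using p2)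
            (by simpa [sub_eq_add_neg] using p3) (by simpa [sub_eq_add_neg] using p4))
          have main2 := mul_le_mul_of_nonneg_left main hT
          simp only [hF, cutKernel, neg_neg, ← sub_eq_add_neg]
          rw [← ENNReal.ofReal_add (by positivity) (by positivity),
            ← ENNReal.ofReal_add (by positivity) (by positivity),
            ← ENNReal.ofReal_add (by positivity) (by positivity),
            show (4:ENNReal) = ENNReal.ofReal 4 by simp, ← ENNReal.ofReal_mul (by norm_num)]
          apply ENNReal.ofReal_le_ofReal
          have e : ∀ D : ℝ, T * (1/√D) - 1 ≤ max (T / √D - 1) 0 := fun D => by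
            rw [mul_one_div]; exact le_max_left _ _
          have f1 := e (((z.1:ℝ)+c)^2+((z.2:ℝ)+d)^2)
          have f2 := e (((z.1:ℝ)-c)^2+((z.2:ℝ)-d)^2)
          have f3 := e (((z.1:ℝ)-d)^2+((z.2:ℝ)+c)^2)
          have f4 := e (((z.1:ℝ)+d)^2+((z.2:ℝ)-c)^2)
          have e5 : T * (4 * κ / latNorm z) = 4 * (κ * T / latNorm z) := by ring
          rw [e5] at main2
          linarith
  rw [hsum] at hlow
  exact (ENNReal.mul_le_mul_iff_right (by norm_num) (by norm_num)).1 hlow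

/-- The cell of the origin carries no term of the lattice sum; its share of the integral pays for
the loss at the four unit vectors. -/
lemma cell_zero_lower {T : ℝ} (hT : 0 ≤ T) :
    ENNReal.ofReal (1.4 * T - 1) ≤ ∫⁻ x in cell 0, ENNReal.ofReal (cutKernel T x) := by
  rw [lintegral_cell]
  calc ENNReal.ofReal (1.4 * T - 1) = ∫⁻ y in unitSq, ENNReal.ofReal (1.4 * T - 1) := by
        rw [setLIntegral_const, volume_unitSq, mul_one]
    _ ≤ _ := by
        refine setLIntegral_mono_ae ((measurable_cutKernel T).comp (by fun_prop)).aemeasurable ?_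
        have h0 : ∀ᵐ x : ℝ × ℝ, x ≠ 0 := by
          rw [ae_iff]; simp
        filter_upwards [h0]
        rintro ⟨c, d⟩ h0 ⟨⟨hc1, hc2⟩, hd1, hd2⟩
        simp only at hc1 hc2 hd1 hd2
        apply ENNReal.ofReal_le_ofReal
        simp only [cutKernel, Prod.fst_zero, Prod.snd_zero, Int.cast_zero, zero_add]
        refine le_trans ?_ (le_max_left _ _)
        have hpos : 0 < c^2+d^2 := by
          by_contra h
          have hc : c = 0 := by nlinarith [sq_nonneg c, sq_nonneg d]
          have hd : d = 0 := by nlinarith [sq_nonneg c, sq_nonneg d]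
          exact h0 (by simp [hc, hd])
        have : √(c^2+d^2) ≤ 1/1.4 := by
          rw [Real.sqrt_le_left (by norm_num)]
          nlinarith
        have h2 : 1.4 ≤ 1/√(c^2+d^2) := by
          rw [le_div_iff₀ (by positivity)]; linarith
        have := mul_le_mul_of_nonneg_left h2 hT
        rw [mul_one_div] at this
        linarith

lemma latNorm_sq (z : ℤ × ℤ) : latNorm z ^ 2 = (z.1:ℝ)^2 + (z.2:ℝ)^2 := Real.sq_sqrt (by positivity)

lemma one_le_latNorm {z : ℤ × ℤ} (hz : z ≠ 0) : 1 ≤ latNorm z := by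
  rw [latNorm, Real.one_le_sqrt]
  have : 0 < z.1 ^ 2 + z.2 ^ 2 := by
    by_cases h : z.1 = 0
    · have : z.2 ≠ 0 := fun h' => hz (Prod.ext h h')
      positivity
    · positivity
  exact_mod_cast this

/-- The lattice points of norm `1`. -/
def unitPts : Finset (ℤ × ℤ) := {(1, 0), (-1, 0), (0, 1), (0, -1)}

lemma two_le_sq_of_notMem {z : ℤ × ℤ} (hz : z ≠ 0) (h : z ∉ unitPts) : 2 ≤ latNorm z ^ 2 := by
  rw [latNorm_sq]
  obtain ⟨a, b⟩ := z
  have : 2 ≤ a ^ 2 + b ^ 2 := by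
    by_contra hlt
    have ha : a ^ 2 ≤ 1 := by nlinarith [sq_nonneg b]
    have hb : b ^ 2 ≤ 1 := by nlinarith [sq_nonneg a]
    have ha1 : -1 ≤ a := by nlinarith
    have ha2 : a ≤ 1 := by nlinarith
    have hb1 : -1 ≤ b := by nlinarith
    have hb2 : b ≤ 1 := by nlinarith
    interval_cases a <;> interval_cases b <;> simp [unitPts] at *
  exact_mod_cast this

/-- The comparison of the lattice sum with its integral, with the sharp constant: the right-hand
side is `∫ (T - |x|)₊ / |x| dx` over the plane. -/
lemma first_moment (S : Finset (ℤ × ℤ)) (hS : ∀ z ∈ S, z ≠ 0) {T : ℝ} (hT : 0 ≤ T) :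
    ∑ z ∈ S, (latNorm z)⁻¹ * max (T - latNorm z) 0 ≤ π * T ^ 2 := by
  have hterm : ∀ z ∈ S, (latNorm z)⁻¹ * max (T - latNorm z) 0 = max (T / latNorm z - 1) 0 := by
    intro z hz
    have := one_le_latNorm (hS z hz)
    rw [mul_max_of_nonneg _ _ (by positivity)]
    congr 1
    · field_simp
    · simp
  rw [Finset.sum_congr rfl hterm]
  rcases lt_or_ge T 1 with h1 | h1
  · rw [Finset.sum_eq_zero]
    · positivity
    · intro z hz
      have := one_le_latNorm (hS z hz)
      apply max_eq_right
      rw [sub_nonpos, div_le_one (by linarith)]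
      linarith
  -- a unit vector satisfies the cell inequality up to `T / 10`; the four losses are paid by `cell 0`
  have hlow : ∀ z ∈ S, ENNReal.ofReal (max (T / latNorm z - 1) 0 - if z ∈ unitPts then T / 10 else 0)
      ≤ ∫⁻ x in cell z, ENNReal.ofReal (cutKernel T x) := by
    intro z hz
    have hz1 := one_le_latNorm (hS z hz)
    split_ifs with hu
    · refine le_trans ?_ (cell_lower (hS z hz) (κ := 0.9) hT ?_)
      · have : latNorm z = 1 := by
          have : latNorm z ^ 2 = 1 := by
            rw [latNorm_sq]
            simp only [unitPts, Finset.mem_insert, Finset.mem_singleton] at hu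
            rcases hu with rfl | rfl | rfl | rfl <;> norm_num
          nlinarith
        apply ENNReal.ofReal_le_ofReal
        rw [this, max_eq_left (by linarith)]
        linarith
      · intro r A hr hr2 hA
        have := factor_ninety (N := latNorm z ^ 2) (by positivity) hr hA (by nlinarith)
        rwa [Real.sqrt_sq (by positivity)] at this
    · refine le_trans ?_ (cell_lower (hS z hz) (κ := 1) hT ?_)
      · rw [sub_zero, one_mul, ENNReal.ofReal_max, ENNReal.ofReal_zero]
        simp
      · intro r A hr hr2 hA
        have h2 := two_le_sq_of_notMem (hS z hz) hu
        have := factor_one (N := latNorm z ^ 2) (by positivity) hr hA (by nlinarith)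
        rw [Real.sqrt_sq (by positivity)] at this
        rwa [mul_one]
  have h0 : (0 : ℤ × ℤ) ∉ S := fun h => hS 0 h rfl
  have htot : ∑ z ∈ insert 0 S, ∫⁻ x in cell z, ENNReal.ofReal (cutKernel T x)
      ≤ ENNReal.ofReal (π * T ^ 2) := by
    rw [← lintegral_biUnion_finset (fun z _ w _ h => cell_disjoint h)
      (fun z _ => measurableSet_cell z), ← lintegral_cutKernel hT]
    exact setLIntegral_le_lintegral _ _
  rw [Finset.sum_insert h0] at htot
  have hfin := (add_le_add (cell_zero_lower hT) (Finset.sum_le_sum hlow)).trans htot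
  have hreal : (1.4 * T - 1) + ∑ z ∈ S, (max (T / latNorm z - 1) 0 - if z ∈ unitPts then T / 10 else 0)
      ≤ π * T ^ 2 := by
    refine (ENNReal.ofReal_le_ofReal_iff (by positivity)).1
      ((ENNReal.ofReal_add_le.trans (add_le_add le_rfl ?_)).trans hfin)
    exact Finset.le_sum_of_subadditive _ (by simp) (fun _ _ => ENNReal.ofReal_add_le) _ _
  rw [Finset.sum_sub_distrib] at hreal
  have hdef : ∑ z ∈ S, (if z ∈ unitPts then T / 10 else 0) ≤ 4 * (T / 10) := by
    rw [← Finset.sum_filter, Finset.sum_const, nsmul_eq_mul]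
    have : (S.filter (· ∈ unitPts)).card ≤ 4 := by
      refine (Finset.card_le_card (t := unitPts) fun z hz => (Finset.mem_filter.1 hz).2).trans ?_
      decide
    have h4 : ((S.filter (· ∈ unitPts)).card : ℝ) ≤ 4 := by exact_mod_cast this
    exact mul_le_mul_of_nonneg_right h4 (by positivity)
  linarith

/-! ### Moments and simplex sums -/

lemma integral_posPart_ge {s T : ℝ} (hs : 0 ≤ s) (hT : 0 ≤ T) (k : ℕ) :
    max (T - s) 0 ^ (k + 1) / (k + 1) ≤ ∫ t in (0:ℝ)..T, max (t - s) 0 ^ k := by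
  rcases le_total s T with h | h
  · calc max (T - s) 0 ^ (k + 1) / (k + 1) = ∫ t in s..T, (t - s) ^ k := by
          rw [intervalIntegral.integral_comp_sub_right (fun x => x ^ k), integral_pow,
            max_eq_left (by linarith)]
          simp
      _ = ∫ t in s..T, max (t - s) 0 ^ k := by
          refine intervalIntegral.integral_congr fun t ht => ?_
          rw [Set.uIcc_of_le h] at ht
          rw [max_eq_left (by linarith [ht.1])]
      _ ≤ _ := by
          refine intervalIntegral.integral_mono_interval hs h le_rfl ?_ ?_
          · exact Filter.Eventually.of_forall fun t => by simp only [Pi.zero_apply]; positivity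
          · exact Continuous.intervalIntegrable (by fun_prop) _ _
  · rw [max_eq_right (by linarith), zero_pow (by omega), zero_div]
    exact intervalIntegral.integral_nonneg hT fun t _ => by positivity

/-- The sharp bound for higher powers, obtained from `first_moment` by integrating in `T`. -/
lemma higher_moment (S : Finset (ℤ × ℤ)) (hS : ∀ z ∈ S, z ≠ 0) (k : ℕ) :
    ∀ T : ℝ, 0 ≤ T → ∑ z ∈ S, (latNorm z)⁻¹ * max (T - latNorm z) 0 ^ (k + 1)
      ≤ 2 * π * T ^ (k + 2) / (k + 2) := by
  induction k with
  | zero =>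
    intro T hT
    have := first_moment S hS hT
    simp only [zero_add, pow_one]
    refine this.trans (le_of_eq ?_)
    push_cast; ring
  | succ k ih =>
    intro T hT
    calc ∑ z ∈ S, (latNorm z)⁻¹ * max (T - latNorm z) 0 ^ (k + 1 + 1)
        ≤ ∑ z ∈ S, ((k + 2 : ℝ) * ∫ t in (0:ℝ)..T, (latNorm z)⁻¹ * max (t - latNorm z) 0 ^ (k + 1)) := by
          refine Finset.sum_le_sum fun z hz => ?_
          have h0 : 0 ≤ latNorm z := Real.sqrt_nonneg _
          have := integral_posPart_ge h0 hT (k + 1)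
          rw [div_le_iff₀ (by positivity)] at this
          rw [intervalIntegral.integral_const_mul, mul_left_comm]
          refine mul_le_mul_of_nonneg_left ?_ (by positivity)
          refine this.trans (le_of_eq ?_)
          push_cast; ring
      _ = (k + 2 : ℝ) * ∫ t in (0:ℝ)..T, ∑ z ∈ S, (latNorm z)⁻¹ * max (t - latNorm z) 0 ^ (k + 1) := by
          rw [intervalIntegral.integral_finsetSum, Finset.mul_sum]
          exact fun z _ => Continuous.intervalIntegrable (by fun_prop) _ _
      _ ≤ (k + 2 : ℝ) * ∫ t in (0:ℝ)..T, 2 * π * t ^ (k + 2) / (k + 2) := by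
          refine mul_le_mul_of_nonneg_left ?_ (by positivity)
          refine intervalIntegral.integral_mono_on hT ?_ ?_ fun t ht => ih t ht.1
          · exact Continuous.intervalIntegrable (by fun_prop) _ _
          · exact Continuous.intervalIntegrable (by fun_prop) _ _
      _ = _ := by
          rw [intervalIntegral.integral_div, intervalIntegral.integral_const_mul, integral_pow]
          push_cast
          field_simp
          ring_nf

/-- The sum of `∏ |ξ_i|⁻¹` over `k`-tuples of points of `S` with `∑ |ξ_i| ≤ T`: the lattice
analogue of a simplex integral. -/
noncomputable def simplexSum (S : Finset (ℤ × ℤ)) (k : ℕ) (T : ℝ) : ℝ :=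
  ∑ ξ : Fin k → S, if ∑ i, latNorm (ξ i) ≤ T then ∏ i, (latNorm (ξ i))⁻¹ else 0

lemma simplexSum_succ (S : Finset (ℤ × ℤ)) (k : ℕ) (T : ℝ) :
    simplexSum S (k + 1) T = ∑ z ∈ S, (latNorm z)⁻¹ * simplexSum S k (T - latNorm z) := by
  unfold simplexSum
  rw [← (Fin.consEquiv (fun _ => (S : Type))).sum_comp, Fintype.sum_prod_type,
    ← Finset.sum_coe_sort S]
  refine Finset.sum_congr rfl fun z _ => ?_
  rw [Finset.mul_sum]
  refine Finset.sum_congr rfl fun ξ _ => ?_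
  simp only [Fin.consEquiv_apply, Fin.sum_univ_succ, Fin.prod_univ_succ, Fin.cons_zero,
    Fin.cons_succ, mul_ite, mul_zero]
  congr 1
  rw [le_sub_iff_add_le']

/-- Apart from the factor `2`, this is the simplex volume bound. That factor is lost only in the
step from `k = 0` to `k = 1`, where the sharp cutoff is compared with `first_moment`; every later
step uses `higher_moment` and loses nothing. The bound holds for all real `T`, so that it can be
applied to `T - |z|` without sign conditions. -/
lemma simplexSum_bound (S : Finset (ℤ × ℤ)) (hS : ∀ z ∈ S, z ≠ 0) (k : ℕ) :
    ∀ T : ℝ, simplexSum S k T ≤ 2 * (2 * π * max T 0) ^ k / k.factorial := by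
  have hneg : ∀ {z : ℤ × ℤ} {T : ℝ}, z ∈ S → T < 0 → max (T - latNorm z) 0 = 0 := by
    intro z T hz hT
    have := one_le_latNorm (hS z hz)
    exact max_eq_right (by linarith)
  induction k with
  | zero =>
    intro T
    simp only [simplexSum, Finset.univ_eq_empty, Finset.sum_empty, Finset.prod_empty]
    simp
    split_ifs <;> norm_num
  | succ k ih =>
    intro T
    rcases Nat.eq_zero_or_pos k with rfl | hk
    · rw [simplexSum_succ]
      simp only [simplexSum, Finset.univ_eq_empty, Finset.sum_empty, Finset.prod_empty]
      have h2 := first_moment S hS (T := 2 * max T 0) (by positivity)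
      rcases le_or_gt T 0 with hT | hT
      · rw [Finset.sum_eq_zero]
        · positivity
        · intro z hz
          have := one_le_latNorm (hS z hz)
          simp
          intro h; linarith
      · rw [max_eq_left hT.le] at h2 ⊢
        -- on `|z| ≤ T` the weight `2T - |z|` is at least `T`
        have : T * ∑ z ∈ S, (latNorm z)⁻¹ * ∑ ξ : Fin 0 → S, (if 0 ≤ T - latNorm z then (1:ℝ) else 0)
            ≤ ∑ z ∈ S, (latNorm z)⁻¹ * max (2 * T - latNorm z) 0 := by
          rw [Finset.mul_sum]
          refine Finset.sum_le_sum fun z hz => ?_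
          have h1 := one_le_latNorm (hS z hz)
          rw [mul_left_comm]
          refine mul_le_mul_of_nonneg_left ?_ (by positivity)
          simp only [Finset.sum_const, Finset.card_univ, Fintype.card_unique, one_smul]
          split_ifs with h
          · exact le_max_of_le_left (by linarith)
          · simp
        have h3 := this.trans h2
        simp only [zero_add, pow_one, Nat.factorial_one, Nat.cast_one, div_one]
        refine le_of_mul_le_mul_left (h3.trans (le_of_eq ?_)) hT
        ring
    · obtain ⟨j, rfl⟩ : ∃ j, k = j + 1 := ⟨k - 1, by omega⟩
      rw [simplexSum_succ]
      have h1 : ∑ z ∈ S, (latNorm z)⁻¹ * simplexSum S (j + 1) (T - latNorm z)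
          ≤ 2 * (2 * π) ^ (j + 1) / (j + 1).factorial *
            ∑ z ∈ S, (latNorm z)⁻¹ * max (T - latNorm z) 0 ^ (j + 1) := by
        rw [Finset.mul_sum]
        refine Finset.sum_le_sum fun z hz => ?_
        have h1 := one_le_latNorm (hS z hz)
        refine (mul_le_mul_of_nonneg_left (ih _) (by positivity)).trans (le_of_eq ?_)
        rw [mul_pow]; ring
      refine h1.trans ?_
      rcases le_or_gt 0 T with hT | hT
      · refine (mul_le_mul_of_nonneg_left (higher_moment S hS j T hT) (by positivity)).trans
          (le_of_eq ?_)
        rw [max_eq_left hT, Nat.factorial_succ (j + 1), mul_pow]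
        push_cast
        field_simp
        ring
      · rw [Finset.sum_eq_zero, mul_zero]
        · positivity
        · intro z hz
          rw [hneg hz hT]; simp

/-! ### Loop sums -/

/-- The logarithm: the `8m` lattice points with sup norm `m` contribute at most `8 / m`. -/
lemma sum_inv_sq (S : Finset (ℤ × ℤ)) {T : ℝ} (hT : 2 ≤ T)
    (hS : ∀ z ∈ S, z ≠ 0 ∧ latNorm z ≤ T) :
    ∑ z ∈ S, (latNorm z)⁻¹ ^ 2 ≤ 20 * Real.log T := by
  have hsub : S ⊆ (Finset.Icc 1 ⌊T⌋₊).biUnion (fun m => (Finset.box m : Finset (ℤ × ℤ))) := by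
    intro z hz
    obtain ⟨h0, hle⟩ := hS z hz
    simp only [Finset.mem_biUnion, Int.mem_box, Finset.mem_Icc]
    refine ⟨_, ⟨?_, ?_⟩, rfl⟩
    · rw [Nat.one_le_iff_ne_zero]
      intro h
      exact h0 (Prod.ext (by simp; omega) (by simp; omega))
    · apply Nat.le_floor
      rw [Nat.cast_max]
      refine max_le ?_ ?_
      · rw [Nat.cast_natAbs, Int.cast_abs]
        exact (Real.abs_le_sqrt (by nlinarith [sq_nonneg (z.2:ℝ)])).trans hle
      · rw [Nat.cast_natAbs, Int.cast_abs]
        exact (Real.abs_le_sqrt (by nlinarith [sq_nonneg (z.1:ℝ)])).trans hle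
  have hbox : ∀ m ∈ Finset.Icc 1 ⌊T⌋₊,
      ∑ z ∈ (Finset.box m : Finset (ℤ × ℤ)), (latNorm z)⁻¹ ^ 2 ≤ 8 * (m : ℝ)⁻¹ := by
    intro m hm
    have hm1 : 1 ≤ m := (Finset.mem_Icc.1 hm).1
    have hm0 : (0:ℝ) < m := by exact_mod_cast hm1
    have : ∀ z ∈ (Finset.box m : Finset (ℤ × ℤ)), (latNorm z)⁻¹ ^ 2 ≤ ((m:ℝ)^2)⁻¹ := by
      intro z hz
      rw [Int.mem_box] at hz
      rw [inv_pow, latNorm_sq]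
      apply inv_anti₀ (by positivity)
      rcases le_total z.1.natAbs z.2.natAbs with h | h
      · rw [max_eq_right h] at hz
        rw [← hz, Nat.cast_natAbs, Int.cast_abs, sq_abs]
        nlinarith [sq_nonneg (z.1:ℝ)]
      · rw [max_eq_left h] at hz
        rw [← hz, Nat.cast_natAbs, Int.cast_abs, sq_abs]
        nlinarith [sq_nonneg (z.2:ℝ)]
    refine (Finset.sum_le_card_nsmul _ _ _ this).trans (le_of_eq ?_)
    rw [Int.card_box (by omega), nsmul_eq_mul]
    push_cast
    field_simp
  have hT0 : 0 < T := by linarith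
  calc ∑ z ∈ S, (latNorm z)⁻¹ ^ 2
      ≤ ∑ z ∈ (Finset.Icc 1 ⌊T⌋₊).biUnion (fun m => (Finset.box m : Finset (ℤ × ℤ))),
          (latNorm z)⁻¹ ^ 2 :=
        Finset.sum_le_sum_of_subset_of_nonneg hsub fun _ _ _ => by positivity
    _ ≤ ∑ m ∈ Finset.Icc 1 ⌊T⌋₊, ∑ z ∈ (Finset.box m : Finset (ℤ × ℤ)), (latNorm z)⁻¹ ^ 2 := by
        rw [Finset.sum_biUnion]
        intro m _ l _ hml
        rw [Function.onFun, Finset.disjoint_left]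
        intro z h1 h2
        rw [Int.mem_box] at h1 h2
        exact hml (h1.symm.trans h2)
    _ ≤ ∑ m ∈ Finset.Icc 1 ⌊T⌋₊, 8 * (m : ℝ)⁻¹ := Finset.sum_le_sum hbox
    _ = 8 * (harmonic ⌊T⌋₊ : ℝ) := by
        rw [harmonic_eq_sum_Icc, ← Finset.mul_sum]; push_cast; rfl
    _ ≤ 8 * (1 + Real.log ⌊T⌋₊) := by
        have := harmonic_le_one_add_log ⌊T⌋₊
        linarith
    _ ≤ 8 * (1 + Real.log T) := by
        have hf : 0 < ⌊T⌋₊ := Nat.floor_pos.2 (by linarith)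
        have := Real.log_le_log (by exact_mod_cast hf) (Nat.floor_le hT0.le)
        linarith
    _ ≤ 20 * Real.log T := by
        have h1 := Real.log_two_gt_d9
        have h2 := Real.log_le_log (by norm_num) hT
        linarith

/-- The loop sum over a finite set of frequencies. The factors `|ξ_0|⁻¹ |ξ_1|⁻¹` are symmetrized to
`|ξ_1|⁻²`, and the closing condition determines `ξ_0`, which is then dropped from the length
constraint. -/
lemma loop_sum_bound (S : Finset (ℤ × ℤ)) (m : ℕ) (T : ℝ) (hS : ∀ z ∈ S, z ≠ 0) (hT : 2 ≤ T)
    (hST : ∀ z ∈ S, latNorm z ≤ T) :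
    (∑ ξ : Fin (m + 2) → S, if ∑ i, (ξ i : ℤ × ℤ) = 0 ∧ ∑ i, latNorm (ξ i) ≤ T then
      ∏ i, (latNorm (ξ i))⁻¹ else 0) ≤ 40 * Real.log T * (2 * π * T) ^ m / m.factorial := by
  set P : (Fin (m + 2) → S) → Prop :=
    fun ξ => ∑ i, (ξ i : ℤ × ℤ) = 0 ∧ ∑ i, latNorm (ξ i) ≤ T with hP
  -- the weight with `|ξ_a|⁻²` in place of `|ξ_0|⁻¹ |ξ_1|⁻¹`
  set W : Fin (m + 2) → (Fin (m + 2) → S) → ℝ := fun a ξ =>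
    if P ξ then (latNorm (ξ a))⁻¹ ^ 2 * ∏ i : Fin m, (latNorm (ξ i.succ.succ))⁻¹ else 0 with hW
  have hamgm : ∀ ξ, (if P ξ then ∏ i, (latNorm (ξ i))⁻¹ else 0) ≤ (W 0 ξ + W 1 ξ) / 2 := by
    intro ξ
    simp only [hW]
    split_ifs with h
    · rw [Fin.prod_univ_succ, Fin.prod_univ_succ, Fin.succ_zero_eq_one]
      have hprod : 0 ≤ ∏ i : Fin m, (latNorm (ξ i.succ.succ))⁻¹ :=
        Finset.prod_nonneg fun i _ => inv_nonneg.2 (Real.sqrt_nonneg _)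
      nlinarith [mul_nonneg (sq_nonneg ((latNorm (ξ 0))⁻¹ - (latNorm (ξ 1))⁻¹)) hprod]
    · simp
  have hswap : ∑ ξ, W 0 ξ = ∑ ξ, W 1 ξ := by
    rw [← (Equiv.arrowCongr (Equiv.swap (0 : Fin (m+2)) 1) (Equiv.refl S)).sum_comp]
    refine Finset.sum_congr rfl fun ξ _ => ?_
    have e : ∀ i, (Equiv.arrowCongr (Equiv.swap (0 : Fin (m+2)) 1) (Equiv.refl S)) ξ i
        = ξ (Equiv.swap 0 1 i) := fun i => by simp [Equiv.arrowCongr]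
    have hPe : P ((Equiv.arrowCongr (Equiv.swap (0 : Fin (m+2)) 1) (Equiv.refl S)) ξ) ↔ P ξ := by
      simp only [hP, e]
      rw [Equiv.sum_comp (Equiv.swap (0 : Fin (m+2)) 1) (fun i => (ξ i : ℤ × ℤ)),
        Equiv.sum_comp (Equiv.swap (0 : Fin (m+2)) 1) (fun i => latNorm (ξ i))]
    have hfix : ∀ i : Fin m, Equiv.swap (0 : Fin (m+2)) 1 i.succ.succ = i.succ.succ := fun i =>
      Equiv.swap_apply_of_ne_of_ne (Fin.succ_ne_zero _)
        (by rw [← Fin.succ_zero_eq_one]; exact fun h => Fin.succ_ne_zero _ (Fin.succ_injective _ h))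
    simp only [hW, hPe, e, hfix, Equiv.swap_apply_left]
  have htail : ∑ ξ, W 1 ξ ≤ ∑ η : Fin (m + 1) → S,
      if ∑ i, latNorm (η i) ≤ T then (latNorm (η 0))⁻¹ ^ 2 * ∏ i : Fin m, (latNorm (η i.succ))⁻¹
      else 0 := by
    simp only [hW]
    rw [← Finset.sum_filter]
    have hinj : Set.InjOn (fun ξ : Fin (m + 2) → S => Fin.tail ξ)
        (Finset.univ.filter P : Finset (Fin (m + 2) → S)) := by
      intro ξ hξ ζ hζ h
      simp only [Finset.coe_filter, Finset.mem_univ, true_and, Set.mem_ofPred_eq, hP] at hξ hζ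
      have ht : ∀ i : Fin (m+1), ξ i.succ = ζ i.succ := fun i => congrFun h i
      have h0 := hξ.1.trans hζ.1.symm
      rw [Fin.sum_univ_succ, Fin.sum_univ_succ (fun i => (ζ i : ℤ × ℤ))] at h0
      simp only [ht] at h0
      have h00 := Subtype.ext (add_right_cancel h0)
      funext i
      exact Fin.cases h00 ht i
    refine (Finset.sum_image (f := fun η : Fin (m+1) → S => (latNorm (η 0))⁻¹ ^ 2 *
      ∏ i : Fin m, (latNorm (η i.succ))⁻¹) hinj).symm.le.trans ?_
    rw [← Finset.sum_filter]
    refine Finset.sum_le_sum_of_subset_of_nonneg ?_ ?_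
    · intro η hη
      obtain ⟨ξ, hξ, rfl⟩ := Finset.mem_image.1 hη
      have hξ' := (Finset.mem_filter.1 hξ).2.2
      rw [Fin.sum_univ_succ] at hξ'
      have : 0 ≤ latNorm (ξ 0) := Real.sqrt_nonneg _
      simp only [Finset.mem_filter, Finset.mem_univ, true_and, Fin.tail]
      linarith
    · intro η _ _
      exact mul_nonneg (sq_nonneg _)
        (Finset.prod_nonneg fun i _ => inv_nonneg.2 (Real.sqrt_nonneg _))
  have hsplit : (∑ η : Fin (m + 1) → S,
      if ∑ i, latNorm (η i) ≤ T then (latNorm (η 0))⁻¹ ^ 2 * ∏ i : Fin m, (latNorm (η i.succ))⁻¹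
      else 0) = ∑ z ∈ S, (latNorm z)⁻¹ ^ 2 * simplexSum S m (T - latNorm z) := by
    unfold simplexSum
    rw [← (Fin.consEquiv (fun _ => (S : Type))).sum_comp, Fintype.sum_prod_type,
      ← Finset.sum_coe_sort S]
    refine Finset.sum_congr rfl fun z _ => ?_
    rw [Finset.mul_sum]
    refine Finset.sum_congr rfl fun ξ _ => ?_
    simp only [Fin.consEquiv_apply, Fin.sum_univ_succ, Fin.cons_zero,
      Fin.cons_succ, mul_ite, mul_zero]
    congr 1
    rw [le_sub_iff_add_le']
  calc _ ≤ ∑ ξ, (W 0 ξ + W 1 ξ) / 2 := Finset.sum_le_sum fun ξ _ => hamgm ξ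
    _ = ∑ ξ, W 1 ξ := by
        rw [← Finset.sum_div, Finset.sum_add_distrib, hswap]; ring
    _ ≤ ∑ z ∈ S, (latNorm z)⁻¹ ^ 2 * simplexSum S m (T - latNorm z) := htail.trans hsplit.le
    _ ≤ ∑ z ∈ S, (latNorm z)⁻¹ ^ 2 * (2 * (2 * π * T) ^ m / m.factorial) := by
        refine Finset.sum_le_sum fun z hz => mul_le_mul_of_nonneg_left ?_ (sq_nonneg _)
        refine (simplexSum_bound S hS m _).trans ?_
        have : 0 ≤ latNorm z := Real.sqrt_nonneg _
        have hm : max (T - latNorm z) 0 ≤ T := max_le (by linarith) (by linarith)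
        gcongr
    _ ≤ (20 * Real.log T) * (2 * (2 * π * T) ^ m / m.factorial) := by
        rw [← Finset.sum_mul]
        refine mul_le_mul_of_nonneg_right ?_ (by positivity)
        exact sum_inv_sq S hT fun z hz => ⟨hS z hz, hST z hz⟩
    _ = _ := by ring

theorem loop_counting_estimate :
    ∃ C > 0, ∀ n : ℕ, 1 ≤ n → ∀ T : ℝ, 2 ≤ T →
      (∑' ξ : Fin (n + 1) → ℤ × ℤ,
          if (∀ i, ξ i ≠ 0) ∧ (∑ i, ξ i) = 0 ∧ (∑ i, latNorm (ξ i)) ≤ T then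
            ∏ i, (latNorm (ξ i))⁻¹
          else 0) ≤
        C * (2 * π) ^ n * Real.log T * T ^ (n - 1) / (n - 1).factorial := by
  refine ⟨40, by norm_num, fun n hn T hT => ?_⟩
  obtain ⟨m, rfl⟩ : ∃ m, n = m + 1 := ⟨n - 1, by omega⟩
  classical
  have hfin : Set.Finite {z : ℤ × ℤ | z ≠ 0 ∧ latNorm z ≤ T} := by
    refine (Set.Finite.prod (Set.finite_Icc (-⌈T⌉) ⌈T⌉) (Set.finite_Icc (-⌈T⌉) ⌈T⌉)).subset ?_
    rintro ⟨a, b⟩ ⟨-, h⟩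
    have ha : |(a:ℝ)| ≤ ⌈T⌉ := (Real.abs_le_sqrt (by nlinarith [sq_nonneg (b:ℝ)])).trans
      (h.trans (Int.le_ceil T))
    have hb : |(b:ℝ)| ≤ ⌈T⌉ := (Real.abs_le_sqrt (by nlinarith [sq_nonneg (a:ℝ)])).trans
      (h.trans (Int.le_ceil T))
    have ha' : |a| ≤ ⌈T⌉ := by exact_mod_cast ha
    have hb' : |b| ≤ ⌈T⌉ := by exact_mod_cast hb
    exact ⟨abs_le.1 ha', abs_le.1 hb'⟩
  set S := hfin.toFinset with hSdef
  have hS : ∀ z, z ∈ S ↔ z ≠ 0 ∧ latNorm z ≤ T := fun z => by simp [hSdef]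
  -- outside `S` the summand vanishes, so the series is a finite sum over tuples in `S`
  have hinj : Function.Injective (fun (ξ : Fin (m + 2) → S) (i : Fin (m + 2)) => (ξ i : ℤ × ℤ)) :=
    fun ξ ζ h => funext fun i => Subtype.ext (congrFun h i)
  rw [← hinj.tsum_eq, tsum_fintype]
  · have hb := loop_sum_bound S m T (fun z hz => ((hS z).1 hz).1) hT (fun z hz => ((hS z).1 hz).2)
    have hne : ∀ ξ : Fin (m + 2) → S, ∀ i, (ξ i : ℤ × ℤ) ≠ 0 := fun ξ i => ((hS _).1 (ξ i).2).1
    simp only [hne, ne_eq, not_false_eq_true, implies_true, true_and]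
    refine hb.trans ?_
    simp only [Nat.add_sub_cancel]
    have hlog : 0 ≤ Real.log T := Real.log_nonneg (by linarith)
    have hpi : 1 ≤ 2 * π := by linarith [Real.pi_gt_three]
    have : (2 * π) ^ m ≤ (2 * π) ^ (m + 1) := pow_le_pow_right₀ hpi (by omega)
    calc 40 * Real.log T * (2 * π * T) ^ m / m.factorial
        = 40 * (2 * π) ^ m * Real.log T * T ^ m / m.factorial := by rw [mul_pow]; ring
      _ ≤ _ := by gcongr
  · intro ξ hξ
    rw [Function.mem_support, ite_ne_right_iff] at hξ
    obtain ⟨⟨h0, -, hle⟩, -⟩ := hξ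
    refine ⟨fun i => ⟨ξ i, (hS _).2 ⟨h0 i, le_trans ?_ hle⟩⟩, rfl⟩
    exact Finset.single_le_sum (f := fun i => latNorm (ξ i)) (fun j _ => Real.sqrt_nonneg _)
      (Finset.mem_univ i)
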